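/- Correspondence theorem: Fix a model-state pair M,Γ, an assignment v, and the object constant i such that I(i) = (v*I)(↓id,Γ) (i.e. i is the id-value of Γ). Then for every modal query φ(ϱ₁,…,ϱₙ): M,Γ ⊩_v φ(ϱ₁,…,ϱₙ) if and only if ⟨v(ϱ₁),…,v(ϱₙ), i⟩ ∈ FT(φ(ϱ₁,…,ϱₙ))(I_M). -/

import Mathlib

namespace KripkeDB

/-- Variable kinds: object variables and concept variables. -/
inductive VKind : Type
  | obj : VKind
  | con : VKind

/-- A first-order modal model: an augmented frame `⟨G, {R_π}, D_o, D_c⟩` together with an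
interpretation `I`.  `State` is the nonempty set of states, `acc r` is the accessibility
relation `R_r` for each relation symbol `r : RelSym`, `Obj` is the nonempty object domain
`D_o`, and the `m` individual concepts (functions from states to objects, `m = |D_c|`)
are indexed by `Fin m` via the bijection `𝔠` (0-based: the concept indexed by `i` has
`𝔠`-value `i+1`).  The concept indexed by `0` is the distinguished concept `id`
(so `𝔠(id) = 1`), whose value uniquely identifies each state.  By the unique names
assumption, constants are identified with the objects/concepts they denote. -/
structure Model where
  State : Type
  state_ne : Nonempty State
  Obj : Type
  obj_ne : Nonempty Obj
  RelSym : Type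
  acc : RelSym → State → State → Prop
  m : ℕ
  m_pos : 0 < m
  concept : Fin m → State → Obj
  id_inj : ∀ Γ Δ : State, concept ⟨0, m_pos⟩ Γ = concept ⟨0, m_pos⟩ Δ → Γ = Δ

/-- Database values: the domain **dom** = D_o ∪ D_c ∪ Π consists of objects,
concept names and accessibility-relation names. -/
abbrev V (M : Model) : Type := M.Obj ⊕ (Fin M.m ⊕ M.RelSym)

/-- The id-value of a state: `(v*I)(↓id, Γ)`. -/
def idval (M : Model) (Γ : M.State) : M.Obj := M.concept ⟨0, M.m_pos⟩ Γ

/-- A relation instance: a set of tuples over the database domain. -/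
abbrev Inst (M : Model) : Type := Set (List (V M))

noncomputable def deflt (M : Model) : V M := Sum.inl (Classical.choice M.obj_ne)

/-- 1-based attribute access `t(j)`. -/
noncomputable def att (M : Model) (t : List (V M)) (j : ℕ) : V M := t.getD (j - 1) (deflt M)

/-- Projection `π_{j₁,…,jₚ}`. -/
noncomputable def proj (M : Model) (js : List ℕ) (I : Inst M) : Inst M :=
  { u | ∃ t ∈ I, u = js.map (att M t) }

/-- Selection `σ_{j=k}` (attribute `j` equals attribute `k`). -/
noncomputable def selEq (M : Model) (j k : ℕ) (I : Inst M) : Inst M :=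
  { t | t ∈ I ∧ att M t j = att M t k }

/-- Selection `σ_{j=c}` (attribute `j` equals the constant `c`). -/
noncomputable def selC (M : Model) (j : ℕ) (c : V M) (I : Inst M) : Inst M :=
  { t | t ∈ I ∧ att M t j = c }

/-- Cross product `I × J`. -/
def cprod (M : Model) (I J : Inst M) : Inst M :=
  { l | ∃ t ∈ I, ∃ u ∈ J, l = t ++ u }

/-- The `Sta`-tuple of a state `Γ`: its `i`-th entry is the value at `Γ` of the concept
with `𝔠`-value `i`. -/
def staTuple (M : Model) (Γ : M.State) : List (V M) :=
  List.ofFn (fun i : Fin M.m => Sum.inl (M.concept i Γ))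

/-- The instance of the relation `Sta` in the database instance `I_M` associated with `M`. -/
def Sta (M : Model) : Inst M := { l | ∃ Γ : M.State, l = staTuple M Γ }

/-- The instance of the unary relation `Obj` (instance `D_o`) in `I_M`. -/
def ObjI (M : Model) : Inst M := { l | ∃ o : M.Obj, l = [Sum.inl o] }

/-- The instance of the unary relation `Con` (instance `D_c`) in `I_M`. -/
def ConI (M : Model) : Inst M := { l | ∃ c : Fin M.m, l = [Sum.inr (Sum.inl c)] }

/-- The instance of the ternary relation `Rel` in `I_M`: it contains `⟨a,b,π⟩` iff
`R_π(Γ,Δ)` where `a,b` are the id-values of `Γ,Δ`. -/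
def RelI (M : Model) : Inst M :=
  { l | ∃ (r : M.RelSym) (Γ Δ : M.State), M.acc r Γ Δ ∧
      l = [Sum.inl (idval M Γ), Sum.inl (idval M Δ), Sum.inr (Sum.inr r)] }

/-- Membership of a database value in the domain of a variable kind
(`D_o` for object variables, `D_c` for concept variables). -/
def kindOk (M : Model) : VKind → V M → Prop
  | VKind.obj, x => ∃ o : M.Obj, x = Sum.inl o
  | VKind.con, x => ∃ c : Fin M.m, x = Sum.inr (Sum.inl c)

/-- `VT(ϱ₁,…,ϱₙ)`: the cross product `D₁ × … × Dₙ` of the domain relations, where `Dᵢ`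
is `Con` for a concept variable and `Obj` for an object variable
(for the empty list this is `{⟨⟩}`). -/
def VTl (M : Model) (ks : List VKind) : Inst M :=
  { l | List.Forall₂ (kindOk M) ks l }

/-- Object terms: object constants (identified with objects via unique names),
object variables (de Bruijn index `k` denotes the variable `ϱ_{k+1}`), and
relativized concept terms `↓c` for a concept constant `c`. -/
inductive OTm (M : Model) : Type
  | const : M.Obj → OTm M
  | var : ℕ → OTm M
  | down : Fin M.m → OTm M

/-- Term evaluation `(v*I)(·, Γ)`. -/
def teval (M : Model) (v : ℕ → V M) (Γ : M.State) : OTm M → V M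
  | OTm.const o => Sum.inl o
  | OTm.var k => v k
  | OTm.down c => Sum.inl (M.concept c Γ)

/-- The result of the term translation `TT`: an attribute index or a constant. -/
inductive TTRes (M : Model) : Type
  | idx : ℕ → TTRes M
  | con : V M → TTRes M

/-- The term translation `TT` with `n` variables in scope: `TT(c) = 'c'` for an object
constant, `TT(ϱ_k) = k`, and `TT(↓t) = n + 𝔠(t)` for a relativized term. -/
def TT (M : Model) (n : ℕ) : OTm M → TTRes M
  | OTm.const o => TTRes.con (Sum.inl o)
  | OTm.var k => TTRes.idx (k + 1)
  | OTm.down c => TTRes.idx (n + (c.val + 1))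

/-- The value in tuple `t` designated by a `TT`-result. -/
noncomputable def ttval (M : Model) (t : List (V M)) : TTRes M → V M
  | TTRes.idx j => att M t j
  | TTRes.con c => c

/-- Generalized selection `σ_{a=b}` where each side is an attribute index or a constant. -/
noncomputable def selT (M : Model) (a b : TTRes M) (I : Inst M) : Inst M :=
  { t | t ∈ I ∧ ttval M t a = ttval M t b }

/-- Generalized selection `σ_{a≠b}`. -/
noncomputable def selTne (M : Model) (a b : TTRes M) (I : Inst M) : Inst M :=
  { t | t ∈ I ∧ ttval M t a ≠ ttval M t b }

/-- The set of (indices of) variables occurring in a term. -/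
def tvars (M : Model) : OTm M → Set ℕ
  | OTm.var k => {k}
  | _ => ∅

/-- Formulas of the modal language.  Binders (`ex`, `all`, `lam`) bind the de Bruijn
variable `0`; in `⟨λϱ.φ⟩(↓c)` the abstracted variable is an object variable and the
argument term is the relativized concept term `↓c`. -/
inductive Fma (M : Model) : Type
  | eq : OTm M → OTm M → Fma M
  | ne : OTm M → OTm M → Fma M
  | not : Fma M → Fma M
  | and : Fma M → Fma M → Fma M
  | or : Fma M → Fma M → Fma M
  | dia : M.RelSym → Fma M → Fma M
  | box : M.RelSym → Fma M → Fma M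
  | ex : VKind → Fma M → Fma M
  | all : VKind → Fma M → Fma M
  | lam : Fin M.m → Fma M → Fma M

/-- Extending an assignment with a value for the freshly bound variable. -/
def consA (M : Model) (d : V M) (v : ℕ → V M) : ℕ → V M
  | 0 => d
  | k + 1 => v k

/-- Truth in a model: `M,Γ ⊩_v φ`. -/
def Truth (M : Model) : M.State → (ℕ → V M) → Fma M → Prop
  | Γ, v, Fma.eq t₁ t₂ => teval M v Γ t₁ = teval M v Γ t₂
  | Γ, v, Fma.ne t₁ t₂ => teval M v Γ t₁ ≠ teval M v Γ t₂
  | Γ, v, Fma.not φ => ¬ Truth M Γ v φ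
  | Γ, v, Fma.and φ ψ => Truth M Γ v φ ∧ Truth M Γ v ψ
  | Γ, v, Fma.or φ ψ => Truth M Γ v φ ∨ Truth M Γ v ψ
  | Γ, v, Fma.dia r φ => ∃ Δ : M.State, M.acc r Γ Δ ∧ Truth M Δ v φ
  | Γ, v, Fma.box r φ => ∀ Δ : M.State, M.acc r Γ Δ → Truth M Δ v φ
  | Γ, v, Fma.ex k φ => ∃ d : V M, kindOk M k d ∧ Truth M Γ (consA M d v) φ
  | Γ, v, Fma.all k φ => ∀ d : V M, kindOk M k d → Truth M Γ (consA M d v) φ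
  | Γ, v, Fma.lam c φ => Truth M Γ (consA M (Sum.inl (M.concept c Γ)) v) φ

/-- The translation `FT` of modal queries into relational algebra queries, evaluated on
`I_M`.  `ks` is the list of kinds of the free variables `ϱ₁,…,ϱₙ` (so `n = ks.length`).
The box clause is `FT([π]φ) = FT(¬⟨π⟩¬φ)`, written out. -/
noncomputable def FT (M : Model) : List VKind → Fma M → Inst M
  | ks, Fma.eq t₁ t₂ =>
      proj M (List.range' 1 (ks.length + 1))
        (selT M (TT M ks.length t₁) (TT M ks.length t₂) (cprod M (VTl M ks) (Sta M)))
  | ks, Fma.ne t₁ t₂ =>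
      proj M (List.range' 1 (ks.length + 1))
        (selTne M (TT M ks.length t₁) (TT M ks.length t₂) (cprod M (VTl M ks) (Sta M)))
  | ks, Fma.not φ =>
      cprod M (VTl M ks) (proj M [1] (Sta M)) \ FT M ks φ
  | ks, Fma.and φ ψ => FT M ks φ ∩ FT M ks ψ
  | ks, Fma.or φ ψ => FT M ks φ ∪ FT M ks ψ
  | ks, Fma.dia r φ =>
      proj M (List.range' 1 ks.length ++ [ks.length + 2])
        (selC M (ks.length + 4) (Sum.inr (Sum.inr r))
          (selEq M (ks.length + 1) (ks.length + 3) (cprod M (FT M ks φ) (RelI M))))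
  | ks, Fma.box r φ =>
      cprod M (VTl M ks) (proj M [1] (Sta M)) \
        proj M (List.range' 1 ks.length ++ [ks.length + 2])
          (selC M (ks.length + 4) (Sum.inr (Sum.inr r))
            (selEq M (ks.length + 1) (ks.length + 3)
              (cprod M (cprod M (VTl M ks) (proj M [1] (Sta M)) \ FT M ks φ) (RelI M))))
  | ks, Fma.ex k φ =>
      proj M (List.range' 2 (ks.length + 1)) (FT M (k :: ks) φ)
  | ks, Fma.all k φ =>
      proj M (List.range' 2 (ks.length + 1)) (FT M (k :: ks) φ) \
        proj M (List.range' 2 (ks.length + 1))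
          (cprod M (VTl M [k]) (proj M (List.range' 2 (ks.length + 1)) (FT M (k :: ks) φ)) \
            FT M (k :: ks) φ)
  | ks, Fma.lam c φ =>
      proj M (List.range' 2 (ks.length + 1))
        (selEq M 1 (ks.length + 3)
          (selEq M (ks.length + 2) (ks.length + 4)
            (cprod M (FT M (VKind.obj :: ks) φ) (proj M [c.val + 1, 1] (Sta M)))))

/-- Well-formedness of a term in a context of variable kinds. -/
def WFt (M : Model) (ks : List VKind) : OTm M → Prop
  | OTm.const _ => True
  | OTm.var k => ks[k]? = some VKind.obj
  | OTm.down _ => True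

/-- Well-formedness of a formula in a context of variable kinds: a modal query
`φ(ϱ₁,…,ϱₙ)` is a well-formed formula whose free variables are among `ϱ₁,…,ϱₙ`. -/
def WF (M : Model) : List VKind → Fma M → Prop
  | ks, Fma.eq t₁ t₂ => WFt M ks t₁ ∧ WFt M ks t₂
  | ks, Fma.ne t₁ t₂ => WFt M ks t₁ ∧ WFt M ks t₂
  | ks, Fma.not φ => WF M ks φ
  | ks, Fma.and φ ψ => WF M ks φ ∧ WF M ks ψ
  | ks, Fma.or φ ψ => WF M ks φ ∧ WF M ks ψ
  | ks, Fma.dia _ φ => WF M ks φ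
  | ks, Fma.box _ φ => WF M ks φ
  | ks, Fma.ex k φ => WF M (k :: ks) φ
  | ks, Fma.all k φ => WF M (k :: ks) φ
  | ks, Fma.lam _ φ => WF M (VKind.obj :: ks) φ

/-- An assignment conforms to a context of kinds if it maps object variables into `D_o`
and concept variables into `D_c`. -/
def Conf (M : Model) (ks : List VKind) (v : ℕ → V M) : Prop :=
  ∀ k : Fin ks.length, kindOk M (ks.get k) (v k)


def asg (M : Model) : List (V M) → (ℕ → V M) → (ℕ → V M)
  | [], w => w
  | d :: l, w => consA M d (asg M l w)

theorem asg_ofFn (M : Model) (n : ℕ) (v : ℕ → V M) :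
    asg M (List.ofFn (fun j : Fin n => v j)) (fun k => v (k + n)) = v := by
  induction n generalizing v with
  | zero => rfl
  | succ n ih =>
    have := ih (fun k => v (k + 1))
    simp only [List.ofFn_succ, asg]
    funext k
    cases k with
    | zero => rfl
    | succ k =>
      have h := congrFun this k
      simp only [consA]
      rw [← h]
      have e : (fun k => v (k + (n + 1))) = (fun k => v (k + n + 1)) := rfl
      rw [e]
      rfl

theorem asg_lt (M : Model) (l s : List (V M)) (w : ℕ → V M) (k : ℕ) (hk : k < l.length) :
    asg M l w k = att M (l ++ s) (k + 1) := by
  induction l generalizing k with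
  | nil => simp at hk
  | cons d l ih =>
    cases k with
    | zero => rfl
    | succ k =>
      have := ih k (by simpa using hk)
      simpa [asg, consA, att] using this

theorem forall₂_ofFn (M : Model) (ks : List VKind) (v : ℕ → V M) (hv : Conf M ks v) :
    List.Forall₂ (kindOk M) ks (List.ofFn (fun j : Fin ks.length => v j)) := by
  rw [List.forall₂_iff_get]
  refine ⟨by simp, fun i h₁ h₂ => ?_⟩
  have := hv ⟨i, h₁⟩
  simpa using this

theorem map_att (M : Model) (p l s : List (V M)) :
    (List.range' (p.length + 1) l.length).map (att M (p ++ (l ++ s))) = l := by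
  apply List.ext_getElem
  · simp
  · intro i h₁ h₂
    simp only [List.getElem_map, List.getElem_range', att]
    rw [show p.length + 1 + 1 * i - 1 = p.length + i by omega]
    rw [List.getD_append_right _ _ _ _ (by omega), List.getD_append _ _ _ _ (by omega)]
    rw [Nat.add_sub_cancel_left, List.getD_eq_getElem _ _ h₂]

theorem map_att1 (M : Model) (l s : List (V M)) (n : ℕ) (hn : n = l.length) :
    (List.range' 1 n).map (att M (l ++ s)) = l := by
  subst hn; simpa using map_att M [] l s

theorem map_att2 (M : Model) (d : V M) (l s : List (V M)) (n : ℕ) (hn : n = l.length) :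
    (List.range' 2 n).map (att M (d :: (l ++ s))) = l := by
  subst hn; simpa using map_att M [d] l s

theorem att_app (M : Model) (l s : List (V M)) (n j : ℕ) (hn : n = l.length) :
    att M (l ++ s) (n + (j + 1)) = att M s (j + 1) := by
  subst hn
  simp only [att]
  rw [List.getD_append_right _ _ _ _ (by omega)]
  congr 1; omega

theorem att_sta (M : Model) (Γ : M.State) (c : Fin M.m) :
    att M (staTuple M Γ) (c.val + 1) = Sum.inl (M.concept c Γ) := by
  simp [att, staTuple, List.getD]

theorem sta_cons (M : Model) (Γ : M.State) :
    ∃ s, staTuple M Γ = Sum.inl (idval M Γ) :: s := by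
  obtain ⟨x, s, h⟩ : ∃ x s, staTuple M Γ = x :: s := by
    apply List.exists_cons_of_length_pos
    simpa [staTuple] using M.m_pos
  have := att_sta M Γ ⟨0, M.m_pos⟩
  rw [h] at this
  simp [att] at this
  exact ⟨s, by rw [h, this]; rfl⟩

theorem proj_sta (M : Model) : proj M [1] (Sta M) = {u | ∃ Γ, u = [Sum.inl (idval M Γ)]} := by
  ext u; constructor
  · rintro ⟨t, ⟨Γ, rfl⟩, rfl⟩
    refine ⟨Γ, ?_⟩
    simpa [idval] using att_sta M Γ ⟨0, M.m_pos⟩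
  · rintro ⟨Γ, rfl⟩
    refine ⟨_, ⟨Γ, rfl⟩, ?_⟩
    simpa [idval] using (att_sta M Γ ⟨0, M.m_pos⟩).symm

def B (M : Model) (ks : List VKind) (P : List (V M) → M.State → Prop) : Inst M :=
  {t | ∃ l Δ, List.Forall₂ (kindOk M) ks l ∧ t = l ++ [Sum.inl (idval M Δ)] ∧ P l Δ}

theorem mem_B (M : Model) (ks : List VKind) (P : List (V M) → M.State → Prop)
    (l : List (V M)) (Γ : M.State) (h : List.Forall₂ (kindOk M) ks l) :
    l ++ [Sum.inl (idval M Γ)] ∈ B M ks P ↔ P l Γ := by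
  constructor
  · rintro ⟨l', Δ, -, e, hP⟩
    obtain ⟨rfl, e2⟩ := List.append_inj' e rfl
    rw [M.id_inj _ _ (Sum.inl.inj (List.cons.inj e2).1)]; exact hP
  · exact fun hP => ⟨l, Γ, h, rfl, hP⟩

theorem B_ext (M : Model) (ks : List VKind) (P Q : List (V M) → M.State → Prop)
    (h : ∀ l Γ, List.Forall₂ (kindOk M) ks l → (P l Γ ↔ Q l Γ)) : B M ks P = B M ks Q := by
  ext t; constructor
  · rintro ⟨l, Δ, hl, e, hP⟩
    exact ⟨l, Δ, hl, e, (h _ _ hl).1 hP⟩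
  · rintro ⟨l, Δ, hl, e, hP⟩
    exact ⟨l, Δ, hl, e, (h _ _ hl).2 hP⟩

theorem B_full (M : Model) (ks : List VKind) :
    cprod M (VTl M ks) (proj M [1] (Sta M)) = B M ks (fun _ _ => True) := by
  rw [proj_sta]
  ext t; constructor
  · rintro ⟨l, hl, u, ⟨Γ, rfl⟩, rfl⟩
    exact ⟨l, Γ, hl, rfl, trivial⟩
  · rintro ⟨l, Γ, hl, rfl, -⟩
    exact ⟨l, hl, _, ⟨Γ, rfl⟩, rfl⟩

theorem B_diff (M : Model) (ks : List VKind) (P Q : List (V M) → M.State → Prop) :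
    B M ks P \ B M ks Q = B M ks (fun l Γ => P l Γ ∧ ¬ Q l Γ) := by
  ext t; constructor
  · rintro ⟨⟨l, Δ, hl, rfl, hP⟩, h⟩
    exact ⟨l, Δ, hl, rfl, hP, fun hQ => h ((mem_B M ks Q l Δ hl).2 hQ)⟩
  · rintro ⟨l, Δ, hl, rfl, hP, hQ⟩
    exact ⟨⟨l, Δ, hl, rfl, hP⟩, fun h => hQ ((mem_B M ks Q l Δ hl).1 h)⟩

theorem B_inter (M : Model) (ks : List VKind) (P Q : List (V M) → M.State → Prop) :
    B M ks P ∩ B M ks Q = B M ks (fun l Γ => P l Γ ∧ Q l Γ) := by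
  ext t; constructor
  · rintro ⟨⟨l, Δ, hl, rfl, hP⟩, h⟩
    exact ⟨l, Δ, hl, rfl, hP, (mem_B M ks Q l Δ hl).1 h⟩
  · rintro ⟨l, Δ, hl, rfl, hP, hQ⟩
    exact ⟨⟨l, Δ, hl, rfl, hP⟩, ⟨l, Δ, hl, rfl, hQ⟩⟩

theorem B_union (M : Model) (ks : List VKind) (P Q : List (V M) → M.State → Prop) :
    B M ks P ∪ B M ks Q = B M ks (fun l Γ => P l Γ ∨ Q l Γ) := by
  ext t; constructor
  · rintro (⟨l, Δ, hl, rfl, hP⟩ | ⟨l, Δ, hl, rfl, hP⟩)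
    exacts [⟨l, Δ, hl, rfl, Or.inl hP⟩, ⟨l, Δ, hl, rfl, Or.inr hP⟩]
  · rintro ⟨l, Δ, hl, rfl, hP | hQ⟩
    exacts [Or.inl ⟨l, Δ, hl, rfl, hP⟩, Or.inr ⟨l, Δ, hl, rfl, hQ⟩]

theorem B_dia (M : Model) (ks : List VKind) (P : List (V M) → M.State → Prop) (r : M.RelSym) :
    proj M (List.range' 1 ks.length ++ [ks.length + 2])
        (selC M (ks.length + 4) (Sum.inr (Sum.inr r))
          (selEq M (ks.length + 1) (ks.length + 3) (cprod M (B M ks P) (RelI M)))) =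
      B M ks (fun l Γ => ∃ Δ, M.acc r Γ Δ ∧ P l Δ) := by
  ext t; constructor
  · rintro ⟨_, ⟨⟨⟨_, ⟨l, Δ, hl, rfl, hP⟩, _, ⟨r', Γ, Δ', hr, rfl⟩, rfl⟩, h₂⟩, h₁⟩, rfl⟩
    have hn := hl.length_eq
    rw [List.append_assoc] at h₁ h₂ ⊢
    rw [att_app M _ _ _ 3 hn] at h₁
    rw [att_app M _ _ _ 0 hn, att_app M _ _ _ 2 hn] at h₂
    simp [att] at h₁ h₂
    subst h₁
    obtain rfl := M.id_inj _ _ h₂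
    refine ⟨l, Γ, hl, ?_, Δ, hr, hP⟩
    rw [List.map_append, map_att1 M _ _ _ hn]
    simp only [List.map_cons, List.map_nil]
    rw [att_app M _ _ _ 1 hn]
    rfl
  · rintro ⟨l, Γ, hl, rfl, Δ, hr, hP⟩
    have hn := hl.length_eq
    refine ⟨_, ⟨⟨⟨_, ⟨l, Δ, hl, rfl, hP⟩, _, ⟨r, Γ, Δ, hr, rfl⟩, rfl⟩, ?_⟩, ?_⟩, ?_⟩
    · rw [List.append_assoc, att_app M _ _ _ 0 hn, att_app M _ _ _ 2 hn]; rfl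
    · rw [List.append_assoc, att_app M _ _ _ 3 hn]; rfl
    · rw [List.append_assoc, List.map_append, map_att1 M _ _ _ hn]
      simp only [List.map_cons, List.map_nil]
      rw [att_app M _ _ _ 1 hn]
      rfl

theorem B_ex (M : Model) (k : VKind) (ks : List VKind) (P : List (V M) → M.State → Prop) :
    proj M (List.range' 2 (ks.length + 1)) (B M (k :: ks) P) =
      B M ks (fun l Γ => ∃ d, kindOk M k d ∧ P (d :: l) Γ) := by
  have key : ∀ d l (Γ : M.State), ks.length = l.length →
      (List.range' 2 (ks.length + 1)).map (att M (d :: l ++ [Sum.inl (idval M Γ)])) =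
        l ++ [Sum.inl (idval M Γ)] := by
    intro d l Γ hn
    simpa using map_att2 M d (l ++ [Sum.inl (idval M Γ)]) [] (ks.length + 1) (by simp [hn])
  ext t; constructor
  · rintro ⟨_, ⟨_, Γ, hl, rfl, hP⟩, rfl⟩
    obtain _ | ⟨hd, hl⟩ := hl
    exact ⟨_, Γ, hl, key _ _ _ hl.length_eq, _, hd, hP⟩
  · rintro ⟨l, Γ, hl, rfl, d, hd, hP⟩
    exact ⟨_, ⟨d :: l, Γ, .cons hd hl, rfl, hP⟩, (key _ _ _ hl.length_eq).symm⟩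

theorem B_cons (M : Model) (k : VKind) (ks : List VKind) (P : List (V M) → M.State → Prop) :
    cprod M (VTl M [k]) (B M ks P) = B M (k :: ks) (fun l Γ => P l.tail Γ) := by
  ext t; constructor
  · rintro ⟨_, hd, _, ⟨l, Γ, hl, rfl, hP⟩, rfl⟩
    obtain _ | ⟨hd, h0⟩ := hd
    cases h0
    exact ⟨_ :: l, Γ, .cons hd hl, rfl, hP⟩
  · rintro ⟨_, Γ, hl, rfl, hP⟩
    obtain _ | ⟨hd, hl⟩ := hl
    exact ⟨[_], .cons hd .nil, _, ⟨_, Γ, hl, rfl, hP⟩, rfl⟩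

theorem B_lam (M : Model) (ks : List VKind) (P : List (V M) → M.State → Prop) (c : Fin M.m) :
    proj M (List.range' 2 (ks.length + 1))
        (selEq M 1 (ks.length + 3)
          (selEq M (ks.length + 2) (ks.length + 4)
            (cprod M (B M (VKind.obj :: ks) P) (proj M [c.val + 1, 1] (Sta M))))) =
      B M ks (fun l Γ => P (Sum.inl (M.concept c Γ) :: l) Γ) := by
  have key : ∀ d l s (Γ : M.State), ks.length = l.length →
      (List.range' 2 (ks.length + 1)).map (att M ((d :: l ++ [Sum.inl (idval M Γ)]) ++ s)) =
        l ++ [Sum.inl (idval M Γ)] := by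
    intro d l s Γ hn
    exact map_att2 M d (l ++ [Sum.inl (idval M Γ)]) s (ks.length + 1) (by simp [hn])
  have hs : ∀ Δ : M.State, [c.val + 1, 1].map (att M (staTuple M Δ)) =
      [Sum.inl (M.concept c Δ), Sum.inl (idval M Δ)] := by
    intro Δ
    have := att_sta M Δ ⟨0, M.m_pos⟩
    simp only [List.map_cons, List.map_nil, att_sta]
    simpa [idval] using this
  have a2 : ∀ (d : V M) l s, ks.length = l.length →
      att M ((d :: l) ++ s) (ks.length + 2) = att M s 1 := by
    intro d l s hn
    exact att_app M (d :: l) s (ks.length + 1) 0 (by simp [hn])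
  have a3 : ∀ (d : V M) l s, ks.length = l.length →
      att M ((d :: l) ++ s) (ks.length + 3) = att M s 2 := by
    intro d l s hn
    exact att_app M (d :: l) s (ks.length + 1) 1 (by simp [hn])
  have a4 : ∀ (d : V M) l s, ks.length = l.length →
      att M ((d :: l) ++ s) (ks.length + 4) = att M s 3 := by
    intro d l s hn
    exact att_app M (d :: l) s (ks.length + 1) 2 (by simp [hn])
  ext t; constructor
  · rintro ⟨_, ⟨⟨⟨_, ⟨_, Γ, hl, rfl, hP⟩, _, ⟨_, ⟨Δ, rfl⟩, rfl⟩, rfl⟩, h₂⟩, h₁⟩, rfl⟩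
    rw [hs] at h₁ h₂ ⊢
    obtain _ | ⟨hd, hl⟩ := hl
    have hn := hl.length_eq
    rw [key _ _ _ _ hn]
    rw [List.append_assoc, a3 _ _ _ hn] at h₁
    rw [List.append_assoc, a2 _ _ _ hn, a4 _ _ _ hn] at h₂
    simp [att] at h₁ h₂
    obtain rfl := M.id_inj _ _ h₂
    subst h₁
    exact ⟨_, Γ, hl, rfl, hP⟩
  · rintro ⟨l, Γ, hl, rfl, hP⟩
    have hn := hl.length_eq
    refine ⟨_, ⟨⟨⟨_, ⟨_, Γ, .cons ⟨_, rfl⟩ hl, rfl, hP⟩, _, ⟨_, ⟨Γ, rfl⟩, rfl⟩, rfl⟩, ?_⟩, ?_⟩, ?_⟩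
    · rw [hs, List.append_assoc, a2 _ _ _ hn, a4 _ _ _ hn]; rfl
    · rw [hs, List.append_assoc, a3 _ _ _ hn]; rfl
    · rw [key _ _ _ _ hn]

theorem ttval_TT (M : Model) (w : ℕ → V M) (ks : List VKind) (l : List (V M)) (Γ : M.State)
    (hn : ks.length = l.length) (t : OTm M) (ht : WFt M ks t) :
    ttval M (l ++ staTuple M Γ) (TT M ks.length t) = teval M (asg M l w) Γ t := by
  cases t with
  | const o => rfl
  | var k =>
    have : k < ks.length := (List.getElem?_eq_some_iff.1 ht).1
    exact (asg_lt M l _ w k (by omega)).symm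
  | down c =>
    simp only [ttval, TT, teval]
    rw [att_app M _ _ _ _ hn, att_sta]

theorem B_atom (M : Model) (ks : List VKind) (S : Set (List (V M)))
    (P : List (V M) → M.State → Prop)
    (h : ∀ l Γ, ks.length = l.length → (l ++ staTuple M Γ ∈ S ↔ P l Γ)) :
    proj M (List.range' 1 (ks.length + 1)) {t | t ∈ cprod M (VTl M ks) (Sta M) ∧ t ∈ S} =
      B M ks P := by
  have key : ∀ l (Γ : M.State), ks.length = l.length →
      (List.range' 1 (ks.length + 1)).map (att M (l ++ staTuple M Γ)) =
        l ++ [Sum.inl (idval M Γ)] := by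
    intro l Γ hn
    obtain ⟨s, hs⟩ := sta_cons M Γ
    rw [hs]
    have := map_att1 M (l ++ [Sum.inl (idval M Γ)]) s (ks.length + 1) (by simp [hn])
    rw [List.append_assoc] at this
    exact this
  ext t; constructor
  · rintro ⟨_, ⟨⟨l, hl, _, ⟨Γ, rfl⟩, rfl⟩, hS⟩, rfl⟩
    have hn := List.Forall₂.length_eq hl
    exact ⟨l, Γ, hl, key _ _ hn, (h _ _ hn).1 hS⟩
  · rintro ⟨l, Γ, hl, rfl, hP⟩
    have hn := hl.length_eq
    exact ⟨_, ⟨⟨l, hl, _, ⟨Γ, rfl⟩, rfl⟩, (h _ _ hn).2 hP⟩, (key _ _ hn).symm⟩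

theorem kind_ne (M : Model) (k : VKind) : ∃ d, kindOk M k d := by
  cases k with
  | obj => exact ⟨_, M.obj_ne.some, rfl⟩
  | con => exact ⟨_, ⟨0, M.m_pos⟩, rfl⟩

theorem FT_eq_B (M : Model) (w : ℕ → V M) (φ : Fma M) (ks : List VKind) (h : WF M ks φ) :
    FT M ks φ = B M ks (fun l Γ => Truth M Γ (asg M l w) φ) := by
  induction φ generalizing ks with
  | eq t₁ t₂ =>
    refine B_atom M ks {t | ttval M t (TT M ks.length t₁) = ttval M t (TT M ks.length t₂)} _ ?_
    intro l Γ hn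
    simp only [Set.mem_ofPred_eq, Truth]
    rw [ttval_TT M w ks l Γ hn _ h.1, ttval_TT M w ks l Γ hn _ h.2]
  | ne t₁ t₂ =>
    refine B_atom M ks {t | ttval M t (TT M ks.length t₁) ≠ ttval M t (TT M ks.length t₂)} _ ?_
    intro l Γ hn
    simp only [Set.mem_ofPred_eq, Truth]
    rw [ttval_TT M w ks l Γ hn _ h.1, ttval_TT M w ks l Γ hn _ h.2]
  | not φ ih =>
    simp only [FT, Truth]
    rw [ih ks h, B_full, B_diff]
    simp
  | and φ ψ ih₁ ih₂ =>
    simp only [FT, Truth]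
    rw [ih₁ ks h.1, ih₂ ks h.2, B_inter]
  | or φ ψ ih₁ ih₂ =>
    simp only [FT, Truth]
    rw [ih₁ ks h.1, ih₂ ks h.2, B_union]
  | dia r φ ih =>
    simp only [FT, Truth]
    rw [ih ks h, B_dia]
  | box r φ ih =>
    simp only [FT, Truth]
    rw [ih ks h, B_full, B_diff, B_dia, B_diff]
    simp
  | ex k φ ih =>
    simp only [FT, Truth]
    rw [ih (k :: ks) h, B_ex]
    rfl
  | all k φ ih =>
    simp only [FT, Truth]
    rw [ih (k :: ks) h, B_ex, B_cons, B_diff, B_ex, B_diff]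
    apply B_ext
    intro l Γ _
    obtain ⟨d₀, hd₀⟩ := kind_ne M k
    simp only [List.tail_cons, asg]
    constructor
    · rintro ⟨h₁, h₂⟩ d hd
      by_contra hc
      exact h₂ ⟨d, hd, h₁, hc⟩
    · intro H
      exact ⟨⟨d₀, hd₀, H _ hd₀⟩, fun ⟨d, hd, _, hc⟩ => hc (H d hd)⟩
  | lam c φ ih =>
    simp only [FT, Truth]
    rw [ih (VKind.obj :: ks) h, B_lam]
    rfl

/-- **Correspondence theorem.** Fix a model-state pair `M,Γ`, an
assignment `v` (conforming to the kinds `ks` of the free variables `ϱ₁,…,ϱₙ`), and the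
object constant `i` such that `I(i) = (v*I)(↓id,Γ)` (i.e. `i` is the id-value of `Γ`).
Then for every modal query `φ(ϱ₁,…,ϱₙ)`:
`M,Γ ⊩_v φ(ϱ₁,…,ϱₙ)` iff `⟨v(ϱ₁),…,v(ϱₙ), i⟩ ∈ FT(φ(ϱ₁,…,ϱₙ))(I_M)`. -/
theorem correspondence (M : Model) (Γ : M.State) (ks : List VKind) (φ : Fma M)
    (hWF : WF M ks φ) (v : ℕ → V M) (hv : Conf M ks v)
    (i : M.Obj) (hi : i = idval M Γ) :
    Truth M Γ v φ ↔
      (List.ofFn (fun j : Fin ks.length => v j) ++ [Sum.inl i]) ∈ FT M ks φ := by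
  subst hi
  rw [FT_eq_B M (fun k => v (k + ks.length)) φ ks hWF, mem_B]
  · rw [asg_ofFn]
  · exact forall₂_ofFn M ks v hv

end KripkeDB
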